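/- arXiv:1707.06754 — 3 statements merged into one kernel-verified Lean document; each statement's English description precedes it below -/
import Mathlib

section
/- Let x = (x', x'') ∈ ℝ^N × ℝ^{n-N} with 1 ≤ N ≤ n, let α, β ∈ ℝ, let γ = α + β + 1, and assume 2 < γ < N. Then for every 1 < p < ∞ and every smooth compactly supported complex-valued function u on ℝ^n whose support does not meet the set {x' = 0}, one has ((N-γ)/p) · ∫_{ℝ^n} |u|^p / |x'|^γ dx ≤ (∫_{ℝ^n} |∇u|^p / |x'|^{αp} dx)^{1/p} · (∫_{ℝ^n} |u|^p / |x'|^{βp/(p-1)} dx)^{(p-1)/p}. -/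
/-!
The inequality is the divergence theorem followed by Hölder's inequality. Write `r = |x'|`. Away
from `{x' = 0}` the field `r ^ (-γ) x'` has divergence `(N - γ) r ^ (-γ)`. Since `p > 1`, the
function `|u| ^ p` is `C¹`, and the support hypothesis makes `|u| ^ p r ^ (-γ) x'` a compactly
supported `C¹` field, whose divergence integrates to zero (`integral_fderiv_apply_eq_zero`).
Cauchy–Schwarz together with `|∂ᵢ |u| ^ p| ≤ p |u| ^ (p - 1) |∂ᵢ u|` gives the pointwise bound
`weighted_le_div_add`, which integrates to

  `(N - γ) ∫ |u| ^ p / r ^ γ ≤ p ∫ (|∇u| / r ^ α) (|u| ^ (p - 1) / r ^ β)`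

because `γ - 1 = α + β`. Hölder's inequality with exponents `p` and `p / (p - 1)` finishes the
proof.
-/

open MeasureTheory Real

/-- The Euclidean Laplacian of a function on `ℝ^n`. -/
noncomputable def lap {n : ℕ} {E : Type*} [NormedAddCommGroup E] [NormedSpace ℝ E]
    (f : EuclideanSpace ℝ (Fin n) → E) (x : EuclideanSpace ℝ (Fin n)) : E :=
  ∑ i : Fin n,
    fderiv ℝ (fun y => fderiv ℝ f y (EuclideanSpace.single i 1)) x (EuclideanSpace.single i 1)

/-- The Euclidean norm of the gradient of a function on `ℝ^n`. -/
noncomputable def gradNorm {n : ℕ} {E : Type*} [NormedAddCommGroup E] [NormedSpace ℝ E]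
    (f : EuclideanSpace ℝ (Fin n) → E) (x : EuclideanSpace ℝ (Fin n)) : ℝ :=
  Real.sqrt (∑ i : Fin n, ‖fderiv ℝ f x (EuclideanSpace.single i 1)‖ ^ 2)

/-- The Euclidean norm of the first `N` coordinates `x'` of a point `x ∈ ℝ^n`. -/
noncomputable def prNorm (N n : ℕ) (h : N ≤ n) (x : EuclideanSpace ℝ (Fin n)) : ℝ :=
  Real.sqrt (∑ i : Fin N, (x (Fin.castLE h i)) ^ 2)

section CKN

variable {N n : ℕ} (hNn : N ≤ n)

lemma prNorm_nonneg (x : EuclideanSpace ℝ (Fin n)) : 0 ≤ prNorm N n hNn x := Real.sqrt_nonneg _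

lemma prNorm_sq (x : EuclideanSpace ℝ (Fin n)) :
    prNorm N n hNn x ^ 2 = ∑ i : Fin N, (x (Fin.castLE hNn i)) ^ 2 :=
  Real.sq_sqrt (Finset.sum_nonneg fun _ _ => sq_nonneg _)

lemma contDiffAt_prNorm {x : EuclideanSpace ℝ (Fin n)} (hx : prNorm N n hNn x ≠ 0) :
    ContDiffAt ℝ 1 (prNorm N n hNn) x := by
  unfold prNorm at hx ⊢
  refine ContDiffAt.sqrt ?_ ?_
  · have : ContDiff ℝ 1 (fun x : EuclideanSpace ℝ (Fin n) =>
        ∑ i : Fin N, (x (Fin.castLE hNn i)) ^ 2) := by fun_prop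
    exact this.contDiffAt
  · intro h
    simp [h] at hx

lemma contDiffAt_prNorm_rpow {x : EuclideanSpace ℝ (Fin n)} (hx : prNorm N n hNn x ≠ 0) (s : ℝ) :
    ContDiffAt ℝ 1 (fun y => prNorm N n hNn y ^ s) x :=
  (contDiffAt_prNorm hNn hx).rpow_const_of_ne hx

lemma fderiv_prNorm_single {x : EuclideanSpace ℝ (Fin n)} (hx : prNorm N n hNn x ≠ 0)
    (i : Fin N) :
    fderiv ℝ (prNorm N n hNn) x (EuclideanSpace.single (Fin.castLE hNn i) 1)
      = x (Fin.castLE hNn i) / prNorm N n hNn x := by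
  have hd : DifferentiableAt ℝ (prNorm N n hNn) x :=
    (contDiffAt_prNorm hNn hx).differentiableAt one_ne_zero
  -- both sides of `r ^ 2 = ∑ xⱼ ^ 2` are differentiated
  have h1 := hd.hasFDerivAt.pow 2
  have h2 : HasFDerivAt (fun y : EuclideanSpace ℝ (Fin n) =>
      ∑ j : Fin N, (y (Fin.castLE hNn j)) ^ 2)
      (∑ j : Fin N, (2 * x (Fin.castLE hNn j)) •
        (EuclideanSpace.proj (Fin.castLE hNn j) : EuclideanSpace ℝ (Fin n) →L[ℝ] ℝ)) x := by
    refine HasFDerivAt.fun_sum fun j _ => ?_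
    have := (EuclideanSpace.proj (Fin.castLE hNn j) :
      EuclideanSpace ℝ (Fin n) →L[ℝ] ℝ).hasFDerivAt (x := x)
    simpa using this.pow 2
  have h3 : (fun y => prNorm N n hNn y ^ 2) = fun y : EuclideanSpace ℝ (Fin n) =>
      ∑ j : Fin N, (y (Fin.castLE hNn j)) ^ 2 := funext (prNorm_sq hNn)
  rw [← h3] at h2
  have h4 := congrArg
    (fun L => L (EuclideanSpace.single (Fin.castLE hNn i) (1 : ℝ))) (h1.unique h2)
  simp [(Fin.castLE_injective hNn).eq_iff] at h4
  rw [eq_div_iff hx]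
  linarith

lemma fderiv_prNorm_rpow_single {x : EuclideanSpace ℝ (Fin n)} (hx : prNorm N n hNn x ≠ 0)
    (i : Fin N) (s : ℝ) :
    fderiv ℝ (fun y => prNorm N n hNn y ^ s) x (EuclideanSpace.single (Fin.castLE hNn i) 1)
      = s * prNorm N n hNn x ^ (s - 2) * x (Fin.castLE hNn i) := by
  have hd : DifferentiableAt ℝ (prNorm N n hNn) x :=
    (contDiffAt_prNorm hNn hx).differentiableAt one_ne_zero
  have hpos := lt_of_le_of_ne (prNorm_nonneg hNn x) hx.symm
  rw [(hd.hasFDerivAt.rpow_const (p := s) (Or.inl hx)).fderiv]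
  simp only [smul_apply, smul_eq_mul, fderiv_prNorm_single hNn hx]
  have : prNorm N n hNn x ^ (s - 1) = prNorm N n hNn x ^ (s - 2) * prNorm N n hNn x := by
    rw [← Real.rpow_add_one hx]; ring_nf
  rw [this]
  field_simp

lemma integral_fderiv_apply_eq_zero {w : EuclideanSpace ℝ (Fin n) → ℝ} (hw : ContDiff ℝ 1 w)
    (hc : HasCompactSupport w) (v : EuclideanSpace ℝ (Fin n)) :
    Integrable (fun x => fderiv ℝ w x v) ∧ ∫ x, fderiv ℝ w x v = 0 := by
  have hi : Integrable (fun x => fderiv ℝ w x v) :=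
    ((hw.continuous_fderiv one_ne_zero).clm_apply continuous_const).integrable_of_hasCompactSupport
      (hc.fderiv_apply ℝ v)
  refine ⟨hi, ?_⟩
  have := integral_mul_fderiv_eq_neg_fderiv_mul_of_integrable (𝕜 := ℝ) (μ := volume)
    (f := fun _ : EuclideanSpace ℝ (Fin n) => (1 : ℝ)) (g := w) (v := v)
    (by simp) (by simpa using hi)
    (by simpa using hw.continuous.integrable_of_hasCompactSupport hc)
    (fun _ _ => differentiableAt_const _)
    (fun x _ => (hw.differentiable one_ne_zero) x)
  simpa using this

/-- The `i`-th component of the vector field `|u| ^ p |x'| ^ (-γ) x'`. -/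
noncomputable def radialField (u : EuclideanSpace ℝ (Fin n) → ℂ) (p γ : ℝ) (i : Fin N)
    (x : EuclideanSpace ℝ (Fin n)) : ℝ :=
  ‖u x‖ ^ p * (x (Fin.castLE hNn i) * prNorm N n hNn x ^ (-γ))

variable {u : EuclideanSpace ℝ (Fin n) → ℂ} {p : ℝ}

lemma radialField_contDiff (hu : ContDiff ℝ 1 u) (hp : 1 < p)
    (hsupp : ∀ x ∈ tsupport u, prNorm N n hNn x ≠ 0) (γ : ℝ) (i : Fin N) :
    ContDiff ℝ 1 (radialField hNn u p γ i) := by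
  rw [contDiff_iff_contDiffAt]
  intro x
  by_cases hx : x ∈ tsupport u
  · refine (hu.norm_rpow hp).contDiffAt.mul (ContDiffAt.mul ?_
      (contDiffAt_prNorm_rpow hNn (hsupp x hx) _))
    fun_prop
  · refine (contDiffAt_const (c := (0 : ℝ))).congr_of_eventuallyEq ?_
    filter_upwards [notMem_tsupport_iff_eventuallyEq.mp hx] with y hy
    simp [radialField, hy, Real.zero_rpow (by linarith : p ≠ 0)]

lemma radialField_hasCompactSupport (hc : HasCompactSupport u) (hp : 1 < p) (γ : ℝ) (i : Fin N) :
    HasCompactSupport (radialField hNn u p γ i) := by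
  refine hc.mono fun x hx => ?_
  contrapose! hx
  simp only [Function.mem_support, not_not] at hx
  simp [radialField, hx, Real.zero_rpow (by linarith : p ≠ 0)]

/-- A continuous function supported in `tsupport u`, divided by a power of `|x'|`, is
continuous with compact support: the weight is singular only off `tsupport u`. -/
lemma continuous_div_prNorm_rpow (hc : HasCompactSupport u)
    (hsupp : ∀ x ∈ tsupport u, prNorm N n hNn x ≠ 0) {f : EuclideanSpace ℝ (Fin n) → ℝ}
    (hf : Continuous f) (hfu : Function.support f ⊆ tsupport u) (s : ℝ) :
    Continuous (fun x => f x / prNorm N n hNn x ^ s) ∧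
      HasCompactSupport (fun x => f x / prNorm N n hNn x ^ s) := by
  have hsub : Function.support (fun x => f x / prNorm N n hNn x ^ s) ⊆ tsupport u := by
    refine fun x hx => hfu ?_
    contrapose! hx
    simp only [Function.mem_support, not_not] at hx
    simp [hx]
  refine ⟨continuous_of_tsupport fun x hx => ?_, hc.mono' hsub⟩
  have hx' := hsupp x (closure_minimal hsub (isClosed_tsupport u) hx)
  refine hf.continuousAt.div (contDiffAt_prNorm_rpow hNn hx' s).continuousAt ?_
  exact (Real.rpow_pos_of_pos (lt_of_le_of_ne (prNorm_nonneg hNn x) hx'.symm) s).ne'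

lemma abs_fderiv_norm_rpow_apply_le (hu : Differentiable ℝ u) (hp : 1 < p)
    (x v : EuclideanSpace ℝ (Fin n)) :
    |fderiv ℝ (fun y => ‖u y‖ ^ p) x v| ≤ p * ‖u x‖ ^ (p - 1) * ‖fderiv ℝ u x v‖ := by
  rw [hu.fderiv_norm_rpow hp]
  simp only [smul_apply, ContinuousLinearMap.comp_apply, smul_eq_mul,
    innerSL_apply_apply]
  rw [abs_mul, abs_of_nonneg (by positivity)]
  rcases eq_or_ne (u x) 0 with h0 | h0
  · simp [h0]; positivity
  · have h1 : ‖u x‖ ^ (p - 1) = ‖u x‖ ^ (p - 2) * ‖u x‖ := by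
      rw [← Real.rpow_add_one (norm_ne_zero_iff.2 h0)]; ring_nf
    rw [h1]
    calc _ ≤ p * ‖u x‖ ^ (p - 2) * (‖u x‖ * ‖fderiv ℝ u x v‖) := by
          gcongr
          exact abs_real_inner_le_norm _ _
      _ = _ := by ring

lemma sum_fderiv_sq_le_gradNorm_sq (u : EuclideanSpace ℝ (Fin n) → ℂ)
    (x : EuclideanSpace ℝ (Fin n)) :
    ∑ i : Fin N, ‖fderiv ℝ u x (EuclideanSpace.single (Fin.castLE hNn i) 1)‖ ^ 2
      ≤ gradNorm u x ^ 2 := by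
  rw [gradNorm, Real.sq_sqrt (Finset.sum_nonneg fun _ _ => sq_nonneg _)]
  refine (Finset.sum_map Finset.univ ⟨Fin.castLE hNn, Fin.castLE_injective hNn⟩
    (fun j => ‖fderiv ℝ u x (EuclideanSpace.single j 1)‖ ^ 2)).symm.trans_le ?_
  exact Finset.sum_le_sum_of_subset_of_nonneg (Finset.subset_univ _) fun _ _ _ => sq_nonneg _

/-- Cauchy–Schwarz for the derivative of `|u| ^ p` in the direction `x'`. -/
lemma neg_sum_mul_fderiv_le (hu : Differentiable ℝ u) (hp : 1 < p)
    (x : EuclideanSpace ℝ (Fin n)) :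
    -∑ i : Fin N, x (Fin.castLE hNn i) *
        fderiv ℝ (fun y => ‖u y‖ ^ p) x (EuclideanSpace.single (Fin.castLE hNn i) 1)
      ≤ p * ‖u x‖ ^ (p - 1) * (prNorm N n hNn x * gradNorm u x) := by
  have hc : 0 ≤ p * ‖u x‖ ^ (p - 1) := by positivity
  have hg : 0 ≤ gradNorm u x := Real.sqrt_nonneg _
  set d := fun i : Fin N => ‖fderiv ℝ u x (EuclideanSpace.single (Fin.castLE hNn i) 1)‖
  have hCS : ∑ i : Fin N, |x (Fin.castLE hNn i)| * d i ≤ prNorm N n hNn x * gradNorm u x := by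
    refine abs_le_of_sq_le_sq' ?_ (mul_nonneg (prNorm_nonneg hNn x) hg) |>.2
    calc _ ≤ (∑ i : Fin N, |x (Fin.castLE hNn i)| ^ 2) * ∑ i, d i ^ 2 :=
          Finset.sum_mul_sq_le_sq_mul_sq _ _ _
      _ ≤ prNorm N n hNn x ^ 2 * gradNorm u x ^ 2 := by
          simp only [sq_abs]
          rw [prNorm_sq]
          gcongr
          exact sum_fderiv_sq_le_gradNorm_sq hNn u x
      _ = _ := by ring
  calc _ ≤ ∑ i : Fin N, p * ‖u x‖ ^ (p - 1) * (|x (Fin.castLE hNn i)| * d i) := by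
        rw [← Finset.sum_neg_distrib]
        refine Finset.sum_le_sum fun i _ => ?_
        refine (neg_le_abs _).trans ?_
        rw [abs_mul]
        have := mul_le_mul_of_nonneg_left (abs_fderiv_norm_rpow_apply_le hu hp x
          (EuclideanSpace.single (Fin.castLE hNn i) 1)) (abs_nonneg (x (Fin.castLE hNn i)))
        refine this.trans (le_of_eq ?_)
        simp only [d]
        ring
    _ = p * ‖u x‖ ^ (p - 1) * ∑ i : Fin N, |x (Fin.castLE hNn i)| * d i := by
        rw [Finset.mul_sum]
    _ ≤ _ := mul_le_mul_of_nonneg_left hCS hc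

lemma sum_fderiv_radialField (hu : ContDiff ℝ 1 u) (hp : 1 < p) {x : EuclideanSpace ℝ (Fin n)}
    (hx : prNorm N n hNn x ≠ 0) (γ : ℝ) :
    ∑ i : Fin N, fderiv ℝ (radialField hNn u p γ i) x
        (EuclideanSpace.single (Fin.castLE hNn i) 1)
      = (N - γ) * (‖u x‖ ^ p * prNorm N n hNn x ^ (-γ)) + prNorm N n hNn x ^ (-γ) *
        ∑ i : Fin N, x (Fin.castLE hNn i) *
          fderiv ℝ (fun y => ‖u y‖ ^ p) x (EuclideanSpace.single (Fin.castLE hNn i) 1) := by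
  have hF : HasFDerivAt (fun y => ‖u y‖ ^ p) _ x :=
    ((hu.norm_rpow hp).differentiable one_ne_zero x).hasFDerivAt
  have hr : HasFDerivAt (fun y => prNorm N n hNn y ^ (-γ)) _ x :=
    ((contDiffAt_prNorm_rpow hNn hx (-γ)).differentiableAt one_ne_zero).hasFDerivAt
  have key : ∀ i : Fin N, fderiv ℝ (radialField hNn u p γ i) x
        (EuclideanSpace.single (Fin.castLE hNn i) 1)
      = ‖u x‖ ^ p * prNorm N n hNn x ^ (-γ)
        + ‖u x‖ ^ p * (-γ) * prNorm N n hNn x ^ (-γ - 2) * x (Fin.castLE hNn i) ^ 2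
        + prNorm N n hNn x ^ (-γ) * (x (Fin.castLE hNn i) *
          fderiv ℝ (fun y => ‖u y‖ ^ p) x (EuclideanSpace.single (Fin.castLE hNn i) 1)) := by
    intro i
    have hi : HasFDerivAt (fun y : EuclideanSpace ℝ (Fin n) => y (Fin.castLE hNn i)) _ x :=
      (EuclideanSpace.proj (Fin.castLE hNn i) : EuclideanSpace ℝ (Fin n) →L[ℝ] ℝ).hasFDerivAt
    have h := (hF.fun_mul (hi.fun_mul hr)).fderiv
    change fderiv ℝ (radialField hNn u p γ i) x = _ at h
    rw [h]
    simp only [add_apply, smul_apply, smul_eq_mul,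
      fderiv_prNorm_rpow_single hNn hx]
    simp
    ring
  have hsq : prNorm N n hNn x ^ (-γ - 2) * prNorm N n hNn x ^ 2 = prNorm N n hNn x ^ (-γ) := by
    rw [← Real.rpow_natCast, ← Real.rpow_add (lt_of_le_of_ne (prNorm_nonneg hNn x) hx.symm)]
    norm_num
  simp_rw [key]
  rw [Finset.sum_add_distrib, Finset.sum_add_distrib, ← Finset.mul_sum, ← Finset.mul_sum,
    ← Finset.mul_sum, ← prNorm_sq]
  simp only [Finset.sum_const, Finset.card_univ, Fintype.card_fin, nsmul_eq_mul]
  linear_combination (-γ * ‖u x‖ ^ p) * hsq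

/-- The weighted density is bounded by the divergence of `radialField` plus `p` times the product
to which Hölder's inequality is applied. Off `tsupport u` both sides vanish. -/
lemma weighted_le_div_add (hu : ContDiff ℝ 1 u) (hp : 1 < p)
    (hsupp : ∀ x ∈ tsupport u, prNorm N n hNn x ≠ 0) {α β γ : ℝ} (hγ : γ = α + β + 1)
    (x : EuclideanSpace ℝ (Fin n)) :
    (N - γ) * (‖u x‖ ^ p / prNorm N n hNn x ^ γ) ≤
      ∑ i : Fin N, fderiv ℝ (radialField hNn u p γ i) x
        (EuclideanSpace.single (Fin.castLE hNn i) 1)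
      + p * (gradNorm u x / prNorm N n hNn x ^ α *
        (‖u x‖ ^ (p - 1) / prNorm N n hNn x ^ β)) := by
  by_cases hx : x ∈ tsupport u
  · have hr := hsupp x hx
    have hpos := lt_of_le_of_ne (prNorm_nonneg hNn x) hr.symm
    rw [sum_fderiv_radialField hNn hu hp hr]
    have h1 := mul_le_mul_of_nonneg_left
      (neg_sum_mul_fderiv_le hNn (hu.differentiable one_ne_zero) hp x)
      (Real.rpow_nonneg hpos.le (-γ))
    have h2 : prNorm N n hNn x ^ (-γ) * prNorm N n hNn x
        = (prNorm N n hNn x ^ α)⁻¹ * (prNorm N n hNn x ^ β)⁻¹ := by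
      rw [← Real.rpow_add_one hr, ← Real.rpow_neg hpos.le, ← Real.rpow_neg hpos.le,
        ← Real.rpow_add hpos, hγ]
      ring_nf
    have h3 : p * (gradNorm u x / prNorm N n hNn x ^ α *
        (‖u x‖ ^ (p - 1) / prNorm N n hNn x ^ β)) = prNorm N n hNn x ^ (-γ) *
          (p * ‖u x‖ ^ (p - 1) * (prNorm N n hNn x * gradNorm u x)) := by
      rw [div_eq_mul_inv, div_eq_mul_inv]
      linear_combination (-p * ‖u x‖ ^ (p - 1) * gradNorm u x) * h2
    rw [h3, div_eq_mul_inv, ← Real.rpow_neg hpos.le]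
    linarith
  · have h0 : u x = 0 := image_eq_zero_of_notMem_tsupport hx
    have hs : ∀ i : Fin N, fderiv ℝ (radialField hNn u p γ i) x = 0 := by
      intro i
      refine fderiv_of_notMem_tsupport ℝ fun h => hx (closure_mono (fun y hy => ?_) h)
      contrapose! hy
      simp only [Function.mem_support, not_not] at hy
      simp [radialField, hy, Real.zero_rpow (by linarith : p ≠ 0)]
    simp [h0, hs, Real.zero_rpow (by linarith : p ≠ 0),
      Real.zero_rpow (by linarith : p - 1 ≠ 0)]

lemma continuous_gradNorm (hu : ContDiff ℝ 1 u) : Continuous (gradNorm u) := by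
  have := hu.continuous_fderiv one_ne_zero
  unfold gradNorm
  fun_prop

lemma support_gradNorm_subset (u : EuclideanSpace ℝ (Fin n) → ℂ) :
    Function.support (gradNorm u) ⊆ tsupport u := by
  intro x hx
  contrapose! hx
  simp [gradNorm, fderiv_of_notMem_tsupport ℝ hx]

end CKN

theorem weighted_Lp_CKN (N n : ℕ) (hN : 1 ≤ N) (hNn : N ≤ n) (α β γ p : ℝ)
    (hγ : γ = α + β + 1) (h2γ : 2 < γ) (hγN : γ < N) (hp : 1 < p)
    (u : EuclideanSpace ℝ (Fin n) → ℂ) (hu : ContDiff ℝ (⊤ : ℕ∞) u) (hcs : HasCompactSupport u)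
    (hsupp : ∀ x ∈ tsupport u, prNorm N n hNn x ≠ 0) :
    ((N - γ) / p) * ∫ x, ‖u x‖ ^ p / prNorm N n hNn x ^ γ ≤
      (∫ x, gradNorm u x ^ p / prNorm N n hNn x ^ (α * p)) ^ (1 / p) *
        (∫ x, ‖u x‖ ^ p / prNorm N n hNn x ^ (β * p / (p - 1))) ^ ((p - 1) / p) := by
  have hu1 : ContDiff ℝ 1 u := hu.of_le (by exact_mod_cast le_top)
  have hp0 : 0 < p := by linarith
  have hp1 : 0 < p - 1 := by linarith
  have hpow : ∀ s : ℝ, 0 < s → Continuous (fun x => ‖u x‖ ^ s) ∧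
      Function.support (fun x => ‖u x‖ ^ s) ⊆ tsupport u := fun s hs =>
    ⟨hu1.continuous.norm.rpow_const fun _ => Or.inr hs.le, fun x hx => subset_tsupport u (by
      contrapose! hx
      simp only [Function.mem_support, not_not] at hx
      simp [hx, Real.zero_rpow hs.ne'])⟩
  obtain ⟨hAc, hAs⟩ := continuous_div_prNorm_rpow hNn hcs hsupp (continuous_gradNorm hu1)
    (support_gradNorm_subset u) α
  obtain ⟨hBc, hBs⟩ := continuous_div_prNorm_rpow hNn hcs hsupp (hpow _ hp1).1 (hpow _ hp1).2 β
  obtain ⟨hFc, hFs⟩ := continuous_div_prNorm_rpow hNn hcs hsupp (hpow _ hp0).1 (hpow _ hp0).2 γ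
  have hdiv := fun i : Fin N => integral_fderiv_apply_eq_zero
    (radialField_contDiff hNn hu1 hp hsupp γ i) (radialField_hasCompactSupport hNn hcs hp γ i)
    (EuclideanSpace.single (Fin.castLE hNn i) 1)
  have hABi := (hAc.mul hBc).integrable_of_hasCompactSupport (μ := volume) hAs.mul_right
  have hdivi := integrable_finsetSum Finset.univ fun i _ => (hdiv i).1
  have hint : (N - γ) * ∫ x, ‖u x‖ ^ p / prNorm N n hNn x ^ γ ≤
      p * ∫ x, gradNorm u x / prNorm N n hNn x ^ α *
        (‖u x‖ ^ (p - 1) / prNorm N n hNn x ^ β) := by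
    have h := integral_mono (μ := volume)
      ((hFc.integrable_of_hasCompactSupport hFs).const_mul (N - γ))
      (hdivi.add (hABi.const_mul p))
      (fun x => weighted_le_div_add hNn hu1 hp hsupp hγ x)
    simp only [Pi.add_apply] at h
    rw [integral_const_mul, integral_add hdivi (hABi.const_mul p), integral_const_mul,
      integral_finsetSum _ fun i _ => (hdiv i).1, Finset.sum_eq_zero fun i _ => (hdiv i).2,
      zero_add] at h
    exact h
  have hpq : p.HolderConjugate (p / (p - 1)) := Real.HolderConjugate.conjExponent hp
  have hH := integral_mul_le_Lp_mul_Lq_of_nonneg (μ := volume) hpq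
    (f := fun x => gradNorm u x / prNorm N n hNn x ^ α)
    (g := fun x => ‖u x‖ ^ (p - 1) / prNorm N n hNn x ^ β)
    (ae_of_all _ fun x => div_nonneg (Real.sqrt_nonneg _)
      (Real.rpow_nonneg (prNorm_nonneg hNn x) _))
    (ae_of_all _ fun x => div_nonneg (by positivity) (Real.rpow_nonneg (prNorm_nonneg hNn x) _))
    (hAc.memLp_of_hasCompactSupport hAs) (hBc.memLp_of_hasCompactSupport hBs)
  have hA : ∀ x, (gradNorm u x / prNorm N n hNn x ^ α) ^ p
      = gradNorm u x ^ p / prNorm N n hNn x ^ (α * p) := fun x => by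
    rw [Real.div_rpow (show 0 ≤ gradNorm u x from Real.sqrt_nonneg _)
      (Real.rpow_nonneg (prNorm_nonneg hNn x) _),
      ← Real.rpow_mul (prNorm_nonneg hNn x)]
  have hB : ∀ x, (‖u x‖ ^ (p - 1) / prNorm N n hNn x ^ β) ^ (p / (p - 1))
      = ‖u x‖ ^ p / prNorm N n hNn x ^ (β * p / (p - 1)) := fun x => by
    rw [Real.div_rpow (by positivity) (Real.rpow_nonneg (prNorm_nonneg hNn x) _),
      ← Real.rpow_mul (prNorm_nonneg hNn x), ← Real.rpow_mul (norm_nonneg _),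
      mul_div_cancel₀ _ hp1.ne', mul_div_assoc]
  simp only [hA, hB, one_div_div] at hH
  refine le_trans ?_ hH
  rw [div_mul_eq_mul_div, div_le_iff₀ hp0]
  linarith
end

section
/- Let n ≥ 1, let Ω ⊆ ℝ^n be a nonempty open set, and let V : Ω → ℝ be a C² function such that ΔV(x) < 0 for all x ∈ Ω. Then for every 1 < p < ∞ and every smooth compactly supported complex-valued function u on Ω, one has (∫_Ω |u|^p / |ΔV| dx)^{1/p} · (∫_Ω (|∇V|^p / |ΔV|^{p-1}) |∇u|^p dx)^{1/p} ≥ (1/p) · (∫_Ω |u|^p dx)^{2/p}. -/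
/-!
Write `I = ∫ |u|^p`, `A = ∫ |u|^p / |ΔV|`, `B = ∫ |∇V|^p |ΔV|^{1-p} |∇u|^p` and `C = ∫ |u|^p |ΔV|`.
Cauchy–Schwarz gives `I² ≤ A C`, so it suffices to show the Hardy type inequality
`C^{1/p} ≤ p B^{1/p}`.

Since `p > 1`, the function `|u|^p` is `C¹` with `|∂ᵢ|u|^p| ≤ p |u|^{p-1} |∂ᵢu|`. As `ΔV < 0`,
integrating by parts gives `C = ∫ ∇|u|^p · ∇V ≤ p ∫ |u|^{p-1} |∇V| |∇u|`, and Hölder's inequality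
for the factors `|u|^{p-1} |ΔV|^{(p-1)/p}` and `|∇V| |∇u| |ΔV|^{-(p-1)/p}` bounds the last integral
by `C^{1-1/p} B^{1/p}`. Dividing by `C^{1-1/p}` yields the claim.

The potential `V` is only regular on `Ω`, but all integrands vanish off the compact set
`tsupport u ⊆ Ω`, so they are continuous with compact support on the whole space.
-/

open MeasureTheory Real

/-- Gluing: a function continuous on `Ω` and zero off the closed set `tsupport u ⊆ Ω` is
continuous. -/
lemma continuous_of_continuousOn_of_tsupport {X Y : Type*} [TopologicalSpace X]
    [AddCommGroup Y] {Ω : Set X} [TopologicalSpace Y] {Z : Type*} [Zero Z] [TopologicalSpace Z]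
    (hΩ : IsOpen Ω) {u : X → Z} (hsupp : tsupport u ⊆ Ω)
    {F : X → Y} (hF : ContinuousOn F Ω) (h0 : ∀ x ∉ tsupport u, F x = 0) :
    Continuous F := by
  rw [continuous_iff_continuousAt]
  intro x
  by_cases hx : x ∈ tsupport u
  · exact hF.continuousAt (hΩ.mem_nhds (hsupp hx))
  · have : F =ᶠ[nhds x] fun _ => 0 := by
      filter_upwards [(isClosed_tsupport u).isOpen_compl.mem_nhds hx] with y hy
      exact h0 y hy
    exact continuousAt_const.congr this.symm

lemma hasCompactSupport_of_zero {X Y Z : Type*} [TopologicalSpace X] [R1Space X] [Zero Y] [Zero Z]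
    {u : X → Z} (hcs : HasCompactSupport u)
    {F : X → Y} (h0 : ∀ x ∉ tsupport u, F x = 0) : HasCompactSupport F :=
  HasCompactSupport.intro hcs h0

lemma gradNorm_nonneg {n : ℕ} {E : Type*} [NormedAddCommGroup E] [NormedSpace ℝ E]
    (f : EuclideanSpace ℝ (Fin n) → E) (x : EuclideanSpace ℝ (Fin n)) : 0 ≤ gradNorm f x :=
  Real.sqrt_nonneg _

lemma gradNorm_eq_zero {n : ℕ} {E : Type*} [NormedAddCommGroup E] [NormedSpace ℝ E]
    (f : EuclideanSpace ℝ (Fin n) → E) {x : EuclideanSpace ℝ (Fin n)} (hx : x ∉ tsupport f) :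
    gradNorm f x = 0 := by
  have : fderiv ℝ f x = 0 := fderiv_of_notMem_tsupport ℝ hx
  simp [gradNorm, this]

lemma continuousOn_gradNorm {n : ℕ} {E : Type*} [NormedAddCommGroup E] [NormedSpace ℝ E]
    {f : EuclideanSpace ℝ (Fin n) → E} {Ω : Set (EuclideanSpace ℝ (Fin n))} (hΩ : IsOpen Ω)
    (hf : ContDiffOn ℝ 1 f Ω) : ContinuousOn (gradNorm f) Ω := by
  have h : ContinuousOn (fderiv ℝ f) Ω := hf.continuousOn_fderiv_of_isOpen hΩ le_rfl
  unfold gradNorm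
  fun_prop

lemma contDiffOn_fderiv_apply {n : ℕ} {V : EuclideanSpace ℝ (Fin n) → ℝ}
    {Ω : Set (EuclideanSpace ℝ (Fin n))} (hΩ : IsOpen Ω) (hV : ContDiffOn ℝ 2 V Ω)
    (v : EuclideanSpace ℝ (Fin n)) : ContDiffOn ℝ 1 (fun y => fderiv ℝ V y v) Ω :=
  (hV.fderiv_of_isOpen hΩ (m := 1) (by norm_num)).clm_apply contDiffOn_const

lemma continuousOn_fderiv_fderiv {n : ℕ} {V : EuclideanSpace ℝ (Fin n) → ℝ}
    {Ω : Set (EuclideanSpace ℝ (Fin n))} (hΩ : IsOpen Ω) (hV : ContDiffOn ℝ 2 V Ω)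
    (v : EuclideanSpace ℝ (Fin n)) :
    ContinuousOn (fun x => fderiv ℝ (fun y => fderiv ℝ V y v) x v) Ω :=
  ((contDiffOn_fderiv_apply hΩ hV v).continuousOn_fderiv_of_isOpen hΩ le_rfl).clm_apply
    continuousOn_const

lemma continuousOn_lap {n : ℕ} {V : EuclideanSpace ℝ (Fin n) → ℝ}
    {Ω : Set (EuclideanSpace ℝ (Fin n))} (hΩ : IsOpen Ω) (hV : ContDiffOn ℝ 2 V Ω) :
    ContinuousOn (lap V) Ω :=
  continuousOn_finsetSum _ fun _ _ => continuousOn_fderiv_fderiv hΩ hV _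

lemma abs_fderiv_norm_rpow_le {n : ℕ} {u : EuclideanSpace ℝ (Fin n) → ℂ} (hu : Differentiable ℝ u)
    {p : ℝ} (hp : 1 < p) (x v : EuclideanSpace ℝ (Fin n)) :
    |fderiv ℝ (fun y => ‖u y‖ ^ p) x v| ≤ p * ‖u x‖ ^ (p - 1) * ‖fderiv ℝ u x v‖ := by
  have h : fderiv ℝ (fun y => ‖u y‖ ^ p) x v
      = p * ‖u x‖ ^ (p - 2) * inner ℝ (u x) (fderiv ℝ u x v) := by
    have h' : HasFDerivAt (fun y => ‖u y‖ ^ p) _ x :=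
      (hasFDerivAt_norm_rpow (u x) hp).comp x (hu x).hasFDerivAt
    rw [h'.fderiv]
    simp
  rw [h]
  by_cases h0 : u x = 0
  · simp only [h0, inner_zero_left, mul_zero, abs_zero]
    positivity
  · have hpos : 0 < ‖u x‖ := norm_pos_iff.mpr h0
    have hpow : ‖u x‖ ^ (p - 1) = ‖u x‖ ^ (p - 2) * ‖u x‖ := by
      rw [← Real.rpow_add_one hpos.ne']; ring_nf
    rw [abs_mul, abs_of_nonneg (by positivity), hpow]
    calc p * ‖u x‖ ^ (p - 2) * |inner ℝ (u x) (fderiv ℝ u x v)|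
        ≤ p * ‖u x‖ ^ (p - 2) * (‖u x‖ * ‖fderiv ℝ u x v‖) := by
          gcongr
          exact abs_real_inner_le_norm _ _
      _ = _ := by ring

/-- The pointwise Cauchy–Schwarz bound `∇|u|^p · ∇V ≤ p |u|^{p-1} |∇V| |∇u|`. -/
lemma sum_fderiv_mul_le {n : ℕ} {u : EuclideanSpace ℝ (Fin n) → ℂ} (hu : Differentiable ℝ u)
    (V : EuclideanSpace ℝ (Fin n) → ℝ) {p : ℝ} (hp : 1 < p) (x : EuclideanSpace ℝ (Fin n)) :
    ∑ i : Fin n, fderiv ℝ (fun y => ‖u y‖ ^ p) x (EuclideanSpace.single i 1)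
        * fderiv ℝ V x (EuclideanSpace.single i 1)
      ≤ p * (‖u x‖ ^ (p - 1) * (gradNorm V x * gradNorm u x)) := by
  calc _ ≤ ∑ i : Fin n, p * ‖u x‖ ^ (p - 1) * (‖fderiv ℝ V x (EuclideanSpace.single i 1)‖
            * ‖fderiv ℝ u x (EuclideanSpace.single i 1)‖) := by
        refine Finset.sum_le_sum fun i _ => (le_abs_self _).trans ?_
        rw [abs_mul, Real.norm_eq_abs (fderiv ℝ V x _)]
        calc _ ≤ p * ‖u x‖ ^ (p - 1) * ‖fderiv ℝ u x (EuclideanSpace.single i 1)‖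
              * |fderiv ℝ V x (EuclideanSpace.single i 1)| := by
              gcongr
              exact abs_fderiv_norm_rpow_le hu hp x _
          _ = _ := by ring
    _ = p * ‖u x‖ ^ (p - 1) * ∑ i : Fin n, (‖fderiv ℝ V x (EuclideanSpace.single i 1)‖
            * ‖fderiv ℝ u x (EuclideanSpace.single i 1)‖) := by rw [Finset.mul_sum]
    _ ≤ p * ‖u x‖ ^ (p - 1) * (gradNorm V x * gradNorm u x) := by
        gcongr
        exact Real.sum_mul_le_sqrt_mul_sqrt _ _ _
    _ = _ := by ring

theorem uncertainty_principle (n : ℕ) (hn : 1 ≤ n) (Ω : Set (EuclideanSpace ℝ (Fin n)))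
    (hΩ : IsOpen Ω) (hne : Ω.Nonempty)
    (V : EuclideanSpace ℝ (Fin n) → ℝ) (hV : ContDiffOn ℝ 2 V Ω)
    (hΔV : ∀ x ∈ Ω, lap V x < 0) (p : ℝ) (hp : 1 < p)
    (u : EuclideanSpace ℝ (Fin n) → ℂ) (hu : ContDiff ℝ (⊤ : ℕ∞) u)
    (hcs : HasCompactSupport u) (hsupp : tsupport u ⊆ Ω) :
    (∫ x in Ω, ‖u x‖ ^ p / |lap V x|) ^ (1 / p) *
        (∫ x in Ω, (gradNorm V x ^ p / |lap V x| ^ (p - 1)) * gradNorm u x ^ p) ^ (1 / p) ≥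
      (1 / p) * (∫ x in Ω, ‖u x‖ ^ p) ^ (2 / p) := by
  have hp0 : 0 < p := by linarith
  have hp1 : 0 < p - 1 := by linarith
  have hu1 : ContDiff ℝ 1 u := hu.of_le (by exact_mod_cast le_top)
  have hud : Differentiable ℝ u := hu1.differentiable (by norm_num)
  have huc : Continuous u := hu1.continuous
  have hu0 : ∀ x ∉ tsupport u, u x = 0 := fun x hx => image_eq_zero_of_notMem_tsupport hx
  have hg0 : ∀ x ∉ tsupport u, gradNorm u x = 0 := fun x hx => gradNorm_eq_zero u hx
  have hΩ0 : ∀ x ∉ Ω, x ∉ tsupport u := fun x hx h => hx (hsupp h)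
  have hLc : ContinuousOn (fun x => |lap V x|) Ω := (continuousOn_lap hΩ hV).abs
  have hLpos : ∀ x ∈ Ω, 0 < |lap V x| := fun x hx => abs_pos.mpr (hΔV x hx).ne
  have hLs : ∀ s : ℝ, ContinuousOn (fun x => |lap V x| ^ s) Ω := fun s =>
    hLc.rpow_const fun x hx => Or.inl (hLpos x hx).ne'
  have hgV : ContinuousOn (gradNorm V) Ω :=
    continuousOn_gradNorm hΩ (hV.of_le (by norm_num))
  have hgu : ContinuousOn (gradNorm u) Ω := continuousOn_gradNorm hΩ hu1.contDiffOn
  have hupow : ∀ s : ℝ, 0 < s → ContinuousOn (fun x => ‖u x‖ ^ s) Ω := fun s hs =>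
    (huc.norm.rpow_const fun x => Or.inr hs.le).continuousOn
  -- All integrands vanish off `Ω`, so the set integrals are integrals over the whole space.
  rw [setIntegral_eq_integral_of_forall_compl_eq_zero
      (fun x hx => by rw [hu0 x (hΩ0 x hx)]; simp [hp0.ne']),
    setIntegral_eq_integral_of_forall_compl_eq_zero
      (fun x hx => by rw [hg0 x (hΩ0 x hx)]; simp [hp0.ne']),
    setIntegral_eq_integral_of_forall_compl_eq_zero
      (fun x hx => by rw [hu0 x (hΩ0 x hx)]; simp [hp0.ne'])]
  set A := ∫ x, ‖u x‖ ^ p / |lap V x| with hA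
  set B := ∫ x, (gradNorm V x ^ p / |lap V x| ^ (p - 1)) * gradNorm u x ^ p with hB
  set I := ∫ x, ‖u x‖ ^ p with hI
  set C := ∫ x, ‖u x‖ ^ p * |lap V x| with hC
  have hA0 : 0 ≤ A := integral_nonneg fun x => by positivity
  have hB0 : 0 ≤ B := integral_nonneg fun x => by
    have := gradNorm_nonneg V x
    have := gradNorm_nonneg u x
    positivity
  have hC0 : 0 ≤ C := integral_nonneg fun x => by positivity
  have hI0 : 0 ≤ I := integral_nonneg fun x => by positivity
  have hmem : ∀ (F : EuclideanSpace ℝ (Fin n) → ℝ) (q : ENNReal), ContinuousOn F Ω →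
      (∀ x ∉ tsupport u, F x = 0) → MemLp F q volume := fun F q hF h0 =>
    (continuous_of_continuousOn_of_tsupport hΩ hsupp hF h0).memLp_of_hasCompactSupport
      (hasCompactSupport_of_zero hcs h0)
  have hint : ∀ F : EuclideanSpace ℝ (Fin n) → ℝ, ContinuousOn F Ω →
      (∀ x ∉ tsupport u, F x = 0) → Integrable F volume := fun F hF h0 =>
    memLp_one_iff_integrable.mp (hmem F 1 hF h0)
  have hIAC : I ≤ A ^ (1 / (2 : ℝ)) * C ^ (1 / (2 : ℝ)) := by
    have hol := integral_mul_le_Lp_mul_Lq_of_nonneg (μ := volume) Real.HolderConjugate.two_two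
      (f := fun x => ‖u x‖ ^ (p / 2) * |lap V x| ^ (-(1 / 2) : ℝ))
      (g := fun x => ‖u x‖ ^ (p / 2) * |lap V x| ^ (1 / 2 : ℝ))
      (.of_forall fun x => by positivity) (.of_forall fun x => by positivity)
      (hmem _ _ ((hupow _ (by positivity)).mul (hLs _)) fun x hx => by
        simp [hu0 x hx, hp0.ne'])
      (hmem _ _ ((hupow _ (by positivity)).mul (hLs _)) fun x hx => by
        simp [hu0 x hx, hp0.ne'])
    convert hol using 1
    · refine integral_congr_ae (.of_forall fun x => ?_)
      by_cases hx : x ∈ tsupport u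
      · have hL := hLpos x (hsupp hx)
        have e1 : |lap V x| ^ (-(1 / 2) : ℝ) * |lap V x| ^ (1 / 2 : ℝ) = 1 := by
          rw [← Real.rpow_add hL]; simp
        have e2 : ‖u x‖ ^ (p / 2) * ‖u x‖ ^ (p / 2) = ‖u x‖ ^ p := by
          rw [← Real.rpow_add_of_nonneg (norm_nonneg _) (by positivity) (by positivity)]
          ring_nf
        simp only
        rw [mul_mul_mul_comm, e1, e2, mul_one]
      · simp [hu0 x hx, hp0.ne']
    · congr 2
      · refine integral_congr_ae (.of_forall fun x => ?_)
        simp only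
        rw [Real.mul_rpow (by positivity) (by positivity), ← Real.rpow_mul (norm_nonneg _),
          ← Real.rpow_mul (abs_nonneg _)]
        have e : -(1 / 2) * 2 = (-1 : ℝ) := by norm_num
        rw [div_mul_cancel₀ p two_ne_zero, e, Real.rpow_neg_one, div_eq_mul_inv]
      · refine integral_congr_ae (.of_forall fun x => ?_)
        simp only
        rw [Real.mul_rpow (by positivity) (by positivity), ← Real.rpow_mul (norm_nonneg _),
          ← Real.rpow_mul (abs_nonneg _)]
        norm_num
  have hfd : ContDiff ℝ 1 (fun y => ‖u y‖ ^ p) := hu1.norm_rpow hp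
  have hf0 : ∀ x ∉ tsupport u, ∀ v, fderiv ℝ (fun y => ‖u y‖ ^ p) x v = 0 := fun x hx v => by
    have := abs_fderiv_norm_rpow_le hud hp x v
    rw [hu0 x hx, norm_zero, Real.zero_rpow hp1.ne', mul_zero, zero_mul] at this
    exact abs_nonpos_iff.mp this
  have hfc : ∀ v, Continuous fun x => fderiv ℝ (fun y => ‖u y‖ ^ p) x v := fun v =>
    (hfd.continuous_fderiv (by norm_num)).clm_apply continuous_const
  have hVc : ∀ v, ContinuousOn (fun y => fderiv ℝ V y v) Ω := fun v =>
    (contDiffOn_fderiv_apply hΩ hV v).continuousOn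
  have hint1 : ∀ v, Integrable (fun x => ‖u x‖ ^ p *
      fderiv ℝ (fun y => fderiv ℝ V y v) x v) volume := fun v =>
    hint _ ((hupow p hp0).mul (continuousOn_fderiv_fderiv hΩ hV v)) fun x hx => by
      simp [hu0 x hx, hp0.ne']
  have hint2 : ∀ v, Integrable (fun x => fderiv ℝ (fun y => ‖u y‖ ^ p) x v *
      fderiv ℝ V x v) volume := fun v =>
    hint _ ((hfc v).continuousOn.mul (hVc v)) fun x hx => by simp [hf0 x hx v]
  have hparts : ∀ v, ∫ x, ‖u x‖ ^ p * fderiv ℝ (fun y => fderiv ℝ V y v) x v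
      = - ∫ x, fderiv ℝ (fun y => ‖u y‖ ^ p) x v * fderiv ℝ V x v := fun v => by
    refine integral_mul_fderiv_eq_neg_fderiv_mul_of_integrable (hint2 v) (hint1 v)
      (hint _ ((hupow p hp0).mul (hVc v)) fun x hx => by simp [hu0 x hx, hp0.ne'])
      (fun x _ => hfd.differentiable (by norm_num) x) fun x hx => ?_
    have hxΩ : x ∈ Ω := by
      by_contra hcon
      refine absurd hx ?_
      rw [notMem_tsupport_iff_eventuallyEq]
      filter_upwards [(isClosed_tsupport u).isOpen_compl.mem_nhds (hΩ0 x hcon)] with y hy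
      simp [hu0 y hy, hp0.ne']
    exact ((contDiffOn_fderiv_apply hΩ hV v).differentiableOn (by norm_num)).differentiableAt
      (hΩ.mem_nhds hxΩ)
  have hCeq : C = ∫ x, ∑ i : Fin n, fderiv ℝ (fun y => ‖u y‖ ^ p) x (EuclideanSpace.single i 1)
        * fderiv ℝ V x (EuclideanSpace.single i 1) := by
    have h1 : C = - ∫ x, ∑ i : Fin n, ‖u x‖ ^ p * fderiv ℝ
        (fun y => fderiv ℝ V y (EuclideanSpace.single i 1)) x (EuclideanSpace.single i 1) := by
      rw [hC, ← integral_neg]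
      refine integral_congr_ae (.of_forall fun x => ?_)
      simp only
      rw [← Finset.mul_sum]
      change _ = -(‖u x‖ ^ p * lap V x)
      by_cases hx : x ∈ tsupport u
      · rw [abs_of_neg (hΔV x (hsupp hx))]; ring
      · simp [hu0 x hx, hp0.ne']
    rw [h1, integral_finsetSum _ fun i _ => hint1 _, integral_finsetSum _ fun i _ => hint2 _,
      ← Finset.sum_neg_distrib]
    refine Finset.sum_congr rfl fun i _ => ?_
    rw [hparts, neg_neg]
  have hCle : C ≤ p * ∫ x, ‖u x‖ ^ (p - 1) * (gradNorm V x * gradNorm u x) := by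
    rw [hCeq, ← integral_const_mul]
    refine integral_mono (integrable_finsetSum _ fun i _ => hint2 _) ?_
      fun x => sum_fderiv_mul_le hud V hp x
    exact (hint _ ((hupow _ hp1).mul (hgV.mul hgu)) fun x hx => by
      simp [hg0 x hx]).const_mul p
  have hHol : ∫ x, ‖u x‖ ^ (p - 1) * (gradNorm V x * gradNorm u x)
      ≤ C ^ ((p - 1) / p) * B ^ (1 / p) := by
    have hpq : (p / (p - 1)).HolderConjugate p := (Real.HolderConjugate.conjExponent hp).symm
    have hol := integral_mul_le_Lp_mul_Lq_of_nonneg (μ := volume) hpq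
      (f := fun x => ‖u x‖ ^ (p - 1) * |lap V x| ^ ((p - 1) / p))
      (g := fun x => gradNorm V x * |lap V x| ^ (-((p - 1) / p)) * gradNorm u x)
      (.of_forall fun x => by positivity)
      (.of_forall fun x => mul_nonneg (mul_nonneg (gradNorm_nonneg V x) (by positivity))
        (gradNorm_nonneg u x))
      (hmem _ _ ((hupow _ hp1).mul (hLs _)) fun x hx => by
        simp [hu0 x hx, hp1.ne'])
      (hmem _ _ ((hgV.mul (hLs _)).mul hgu) fun x hx => by
        simp [hg0 x hx])
    convert hol using 1
    · refine integral_congr_ae (.of_forall fun x => ?_)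
      by_cases hx : x ∈ tsupport u
      · have hL := hLpos x (hsupp hx)
        have e1 : |lap V x| ^ ((p - 1) / p) * |lap V x| ^ (-((p - 1) / p)) = 1 := by
          rw [← Real.rpow_add hL]; simp
        simp only
        linear_combination (-(‖u x‖ ^ (p - 1) * gradNorm V x * gradNorm u x)) * e1
      · simp [hg0 x hx]
    · congr 2
      · refine integral_congr_ae (.of_forall fun x => ?_)
        simp only
        rw [Real.mul_rpow (by positivity) (by positivity), ← Real.rpow_mul (norm_nonneg _),
          ← Real.rpow_mul (abs_nonneg _)]
        have e1 : (p - 1) * (p / (p - 1)) = p := by field_simp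
        have e2 : (p - 1) / p * (p / (p - 1)) = 1 := by field_simp
        rw [e1, e2, Real.rpow_one]
      · rw [one_div_div]
      · refine integral_congr_ae (.of_forall fun x => ?_)
        have h1 := gradNorm_nonneg V x
        have h2 := gradNorm_nonneg u x
        simp only
        rw [Real.mul_rpow (by positivity) h2, Real.mul_rpow h1 (by positivity),
          ← Real.rpow_mul (abs_nonneg _)]
        have e2 : -((p - 1) / p) * p = -(p - 1) := by field_simp
        rw [e2, Real.rpow_neg (abs_nonneg _), div_eq_mul_inv]
  have hhardy : C ^ (1 / p) ≤ p * B ^ (1 / p) := by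
    rcases hC0.eq_or_lt with h | h
    · rw [← h, Real.zero_rpow (by positivity)]
      positivity
    · have hpos : 0 < C ^ ((p - 1) / p) := Real.rpow_pos_of_pos h _
      have e : C = C ^ ((p - 1) / p) * C ^ (1 / p) := by
        rw [← Real.rpow_add h, ← add_div, sub_add_cancel, div_self hp0.ne', Real.rpow_one]
      refine le_of_mul_le_mul_left ?_ hpos
      calc C ^ ((p - 1) / p) * C ^ (1 / p) = C := e.symm
        _ ≤ p * (C ^ ((p - 1) / p) * B ^ (1 / p)) :=
          hCle.trans (mul_le_mul_of_nonneg_left hHol hp0.le)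
        _ = _ := by ring
  have hI2 : I ^ (2 / p) ≤ A ^ (1 / p) * C ^ (1 / p) := by
    have := Real.rpow_le_rpow hI0 hIAC (z := 2 / p) (by positivity)
    rw [Real.mul_rpow (by positivity) (by positivity), ← Real.rpow_mul hA0,
      ← Real.rpow_mul hC0] at this
    have e : 1 / 2 * (2 / p) = 1 / p := by field_simp
    rwa [e] at this
  have hfin : I ^ (2 / p) ≤ p * (A ^ (1 / p) * B ^ (1 / p)) :=
    hI2.trans ((mul_le_mul_of_nonneg_left hhardy (by positivity)).trans_eq (by ring))
  rw [ge_iff_le, one_div_mul_eq_div, div_le_iff₀ hp0]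
  linarith
end

section
/- Let n ≥ 2 and let α ∈ ℝ satisfy α > -2 and n > α + 4. Then for every smooth compactly supported complex-valued function u on ℝ^n whose support does not contain the origin, one has ∫_{ℝ^n} |Δu|² / |x|^α dx ≥ ((n+α)²(n-α-4)²/16) · ∫_{ℝ^n} |u|² / |x|^{α+4} dx. -/
/-!
The inequality is a pointwise inequality up to a divergence. Put `r = ‖x‖`, `β = α + 2`,
`c = (n - α - 4) / 2` and `C = c (c + β) = (n + α)(n - α - 4) / 4`, so that the constant in the
theorem is `C²`. Let `F` be the compactly supported vector field with components
`F i = r ^ (-β) Re (ū ∂ᵢu) + (c + β / 2) r ^ (-β - 2) xᵢ |u|²`. Expanding the derivatives gives,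
away from the origin,

`|Δu|² r ^ (-α) - C² |u|² r ^ (-α - 4) + 2 C div F
  = r ^ (-α - 4) |r² Δu + C u|² + 2 C r ^ (-α - 6) ∑ᵢ |r² ∂ᵢu + c xᵢ u|² ≥ 0`.

The first square encodes the Cauchy–Schwarz step that passes from `Δu` to `Re (ū Δu)`, the second
one the weighted Hardy inequality. Since `∫ div F = 0`, integration yields the claim
(`pointwise_rellich`, `integral_fderiv_eq_zero`). The weights are singular only at the origin, which
lies outside the support of `u`, so all integrands are continuous with compact support
(`contDiff_weight_mul`).
-/


open MeasureTheory Real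

/-- Multiplication by a power of the norm preserves `C^m` regularity of functions whose support
avoids the origin, whatever the exponent. -/
lemma contDiff_weight_mul {n : ℕ} {m : WithTop ℕ∞} (s : ℝ) {g : EuclideanSpace ℝ (Fin n) → ℝ}
    (hg : ContDiff ℝ m g) (h0 : (0 : EuclideanSpace ℝ (Fin n)) ∉ tsupport g) :
    ContDiff ℝ m (fun x => ‖x‖ ^ s * g x) := by
  rw [contDiff_iff_contDiffAt]
  intro x
  by_cases hx : x ∈ tsupport g
  · have hx0 : x ≠ 0 := fun h => h0 (h ▸ hx)
    exact ((contDiffAt_norm ℝ hx0).rpow_const_of_ne (norm_ne_zero_iff.2 hx0)).mul hg.contDiffAt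
  · have h : (fun x => ‖x‖ ^ s * g x) =ᶠ[nhds x] fun _ => 0 := by
      filter_upwards [notMem_tsupport_iff_eventuallyEq.1 hx] with y hy
      simp [hy]
    exact contDiffAt_const.congr_of_eventuallyEq h

lemma integral_fderiv_eq_zero {n : ℕ} {F : EuclideanSpace ℝ (Fin n) → ℝ} (hF : ContDiff ℝ 1 F)
    (hc : HasCompactSupport F) (v : EuclideanSpace ℝ (Fin n)) :
    Integrable (fun x => fderiv ℝ F x v) ∧ ∫ x, fderiv ℝ F x v = 0 := by
  have hi : Integrable (fun x => fderiv ℝ F x v) :=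
    ((hF.continuous_fderiv one_ne_zero).clm_apply continuous_const).integrable_of_hasCompactSupport
      (hc.fderiv_apply (𝕜 := ℝ) v)
  refine ⟨hi, ?_⟩
  have := integral_mul_fderiv_eq_neg_fderiv_mul_of_integrable (μ := volume) (f := fun _ => (1 : ℝ))
    (g := F) (v := v) (by simp) (by simpa using hi)
    (by simpa using hF.continuous.integrable_of_hasCompactSupport hc)
    (fun _ _ => differentiableAt_const _) (fun x _ => hF.differentiable one_ne_zero x)
  simpa using this

lemma fderiv_norm_rpow_single {n : ℕ} (s : ℝ) {x : EuclideanSpace ℝ (Fin n)} (hx : x ≠ 0) (i : Fin n) :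
    DifferentiableAt ℝ (fun y : EuclideanSpace ℝ (Fin n) => ‖y‖ ^ s) x ∧
    fderiv ℝ (fun y : EuclideanSpace ℝ (Fin n) => ‖y‖ ^ s) x (EuclideanSpace.single i 1)
      = s * ‖x‖ ^ (s - 2) * x i := by
  have hn : ‖x‖ ≠ 0 := norm_ne_zero_iff.2 hx
  have hp : 0 < ‖x‖ := norm_pos_iff.2 hx
  have h1 := (hasStrictFDerivAt_norm_sq x).hasFDerivAt.rpow_const (p := s / 2)
    (Or.inl (pow_ne_zero 2 hn))
  have h2 : (fun y : EuclideanSpace ℝ (Fin n) => (‖y‖ ^ 2) ^ (s / 2)) = fun y => ‖y‖ ^ s := by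
    ext y
    rw [← Real.rpow_natCast, ← Real.rpow_mul (norm_nonneg y)]
    congr 1
    push_cast
    ring
  rw [h2] at h1
  refine ⟨h1.differentiableAt, ?_⟩
  rw [h1.fderiv]
  have h3 : (‖x‖ ^ 2) ^ (s / 2 - 1) = ‖x‖ ^ (s - 2) := by
    rw [← Real.rpow_natCast, ← Real.rpow_mul hp.le]
    congr 1
    push_cast
    ring
  simp [h3, EuclideanSpace.inner_single_right]
  ring

/-- Integration-by-parts field of the Rellich inequality; `β` is the weight exponent, `k` the
coefficient of the radial part. The real inner product of `ℂ` is `Re (ū v)`. -/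
noncomputable def rellichField {n : ℕ} (β k : ℝ) (u : EuclideanSpace ℝ (Fin n) → ℂ) (i : Fin n)
    (x : EuclideanSpace ℝ (Fin n)) : ℝ :=
  ‖x‖ ^ (-β) * inner ℝ (u x) (fderiv ℝ u x (EuclideanSpace.single i 1))
    + k * (‖x‖ ^ (-β - 2) * (x i * ‖u x‖ ^ 2))

lemma fderiv_rellichField {n : ℕ} (β k : ℝ) {u : EuclideanSpace ℝ (Fin n) → ℂ}
    (hu : ContDiff ℝ (⊤ : ℕ∞) u) {x : EuclideanSpace ℝ (Fin n)} (hx : x ≠ 0) (i : Fin n) :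
    fderiv ℝ (rellichField β k u i) x (EuclideanSpace.single i 1) =
      ‖x‖ ^ (-β - 2) * (-β * (x i * inner ℝ (u x) (fderiv ℝ u x (EuclideanSpace.single i 1)))
        + ‖x‖ ^ 2 * (‖fderiv ℝ u x (EuclideanSpace.single i 1)‖ ^ 2 + inner ℝ (u x)
          (fderiv ℝ (fun y => fderiv ℝ u y (EuclideanSpace.single i 1)) x
            (EuclideanSpace.single i 1)))
        + k * (-(β + 2) * (x i ^ 2 / ‖x‖ ^ 2) * ‖u x‖ ^ 2 + ‖u x‖ ^ 2
          + 2 * (x i * inner ℝ (u x) (fderiv ℝ u x (EuclideanSpace.single i 1))))) := by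
  set e : EuclideanSpace ℝ (Fin n) := EuclideanSpace.single i 1 with he
  have hp : 0 < ‖x‖ := norm_pos_iff.2 hx
  have hud : DifferentiableAt ℝ u x := hu.differentiable (by simp) x
  have hvc : ContDiff ℝ 1 (fun y => fderiv ℝ u y e) :=
    (hu.fderiv_right (m := 1) (by norm_cast)).clm_apply contDiff_const
  have hvd : DifferentiableAt ℝ (fun y => fderiv ℝ u y e) x := hvc.differentiable one_ne_zero x
  obtain ⟨w1, w1'⟩ := fderiv_norm_rpow_single (-β) hx i
  obtain ⟨w2, w2'⟩ := fderiv_norm_rpow_single (-β - 2) hx i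
  have hI := hud.hasFDerivAt.inner ℝ hvd.hasFDerivAt
  have hN := hud.hasFDerivAt.norm_sq
  have hxi : HasFDerivAt (fun y : EuclideanSpace ℝ (Fin n) => y i)
      (EuclideanSpace.proj i : EuclideanSpace ℝ (Fin n) →L[ℝ] ℝ) x :=
    (EuclideanSpace.proj i : EuclideanSpace ℝ (Fin n) →L[ℝ] ℝ).hasFDerivAt
  have hF := (w1.hasFDerivAt.mul hI).add ((w2.hasFDerivAt.mul (hxi.mul hN)).const_mul k)
  have hF' : HasFDerivAt (rellichField β k u i) _ x := hF
  have r1 : ‖x‖ ^ (-β) = ‖x‖ ^ (-β - 2) * ‖x‖ ^ 2 := by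
    rw [← Real.rpow_natCast, ← Real.rpow_add hp]
    congr 1
    push_cast
    ring
  have r2 : ‖x‖ ^ (-β - 2 - 2) = ‖x‖ ^ (-β - 2) / ‖x‖ ^ 2 := by
    rw [← Real.rpow_natCast, ← Real.rpow_sub hp]
    norm_num
  rw [← he] at w1' w2'
  rw [hF'.fderiv]
  simp only [add_apply, smul_apply, Pi.mul_apply, smul_eq_mul, w1', w2',
    ContinuousLinearMap.comp_apply, ContinuousLinearMap.prod_apply, fderivInnerCLM_apply, r1, r2,
    innerSL_apply_apply, real_inner_self_eq_norm_sq, nsmul_eq_mul]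
  have hpe : (EuclideanSpace.proj i : EuclideanSpace ℝ (Fin n) →L[ℝ] ℝ) e = 1 := by simp [he]
  rw [hpe]
  push_cast
  field_simp
  ring

/-- The Rellich inequality before integration: the difference of the two integrands dominates a
multiple of the divergence of `rellichField`. -/
lemma pointwise_rellich {n : ℕ} (α c C : ℝ) (hc : c = (n - α - 4) / 2)
    (hC : C = c * (c + (α + 2))) (hC0 : 0 ≤ C) {u : EuclideanSpace ℝ (Fin n) → ℂ}
    (hu : ContDiff ℝ (⊤ : ℕ∞) u) {x : EuclideanSpace ℝ (Fin n)} (hx : x ≠ 0) :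
    -(2 * C) * ∑ i, fderiv ℝ (rellichField (α + 2) (c + (α + 2) / 2) u i) x
        (EuclideanSpace.single i 1)
      ≤ ‖x‖ ^ (-α) * ‖lap u x‖ ^ 2 - C ^ 2 * (‖x‖ ^ (-(α + 4)) * ‖u x‖ ^ 2) := by
  have hp : 0 < ‖x‖ := norm_pos_iff.2 hx
  simp_rw [fderiv_rellichField _ _ hu hx]
  set v : Fin n → ℂ := fun i => fderiv ℝ u x (EuclideanSpace.single i 1) with hv
  set P : ℝ := ∑ i, x i * inner ℝ (u x) (v i) with hP
  set Q : ℝ := ∑ i, ‖v i‖ ^ 2 with hQ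
  have hL : inner ℝ (u x) (lap u x) = ∑ i, inner ℝ (u x)
      (fderiv ℝ (fun y => fderiv ℝ u y (EuclideanSpace.single i 1)) x
        (EuclideanSpace.single i 1)) := by
    rw [lap, inner_sum]
  have hr : ∑ i, x i ^ 2 = ‖x‖ ^ 2 := (EuclideanSpace.real_norm_sq_eq x).symm
  have e1 : ‖x‖ ^ (-α) = ‖x‖ ^ (-(α + 2) - 2) * ‖x‖ ^ 4 := by
    rw [← Real.rpow_natCast, ← Real.rpow_add hp]
    congr 1
    push_cast
    ring
  have e2 : -(α + 4) = -(α + 2) - 2 := by ring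
  rw [e1, e2]
  set W : ℝ := ‖x‖ ^ (-(α + 2) - 2) with hW
  have hWp : 0 < W := Real.rpow_pos_of_pos hp _
  -- the Cauchy–Schwarz square
  have s1 : 0 ≤ ‖x‖ ^ 4 * ‖lap u x‖ ^ 2 + 2 * C * ‖x‖ ^ 2 * inner ℝ (u x) (lap u x)
      + C ^ 2 * ‖u x‖ ^ 2 := by
    have h := sq_nonneg ‖(‖x‖ ^ 2) • lap u x + C • u x‖
    rw [norm_add_sq_real, norm_smul, norm_smul, real_inner_smul_left, real_inner_smul_right,
      real_inner_comm, mul_pow, mul_pow, Real.norm_eq_abs, Real.norm_eq_abs, sq_abs, sq_abs] at h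
    linarith
  -- the Hardy square
  have s2 : 0 ≤ ‖x‖ ^ 2 * Q + 2 * c * P + c ^ 2 * ‖u x‖ ^ 2 := by
    have h : 0 ≤ ∑ i, ‖(‖x‖ ^ 2) • v i + (c * x i) • u x‖ ^ 2 :=
      Finset.sum_nonneg fun i _ => sq_nonneg _
    have h' : ∑ i, ‖(‖x‖ ^ 2) • v i + (c * x i) • u x‖ ^ 2
        = ‖x‖ ^ 2 * (‖x‖ ^ 2 * Q + 2 * c * P + c ^ 2 * ‖u x‖ ^ 2) := by
      have : ∀ i, ‖(‖x‖ ^ 2) • v i + (c * x i) • u x‖ ^ 2 = ‖x‖ ^ 4 * ‖v i‖ ^ 2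
          + 2 * c * ‖x‖ ^ 2 * (x i * inner ℝ (u x) (v i)) + c ^ 2 * ‖u x‖ ^ 2 * x i ^ 2 := by
        intro i
        rw [norm_add_sq_real, norm_smul, norm_smul, real_inner_smul_left, real_inner_smul_right,
          real_inner_comm, mul_pow, mul_pow, Real.norm_eq_abs, Real.norm_eq_abs, sq_abs, sq_abs]
        ring
      simp_rw [this, Finset.sum_add_distrib, ← Finset.mul_sum, hr]
      ring
    rw [h'] at h
    exact nonneg_of_mul_nonneg_right h (by positivity)
  have hsum : (∑ i, W * (-(α + 2) * (x i * inner ℝ (u x) (v i))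
        + ‖x‖ ^ 2 * (‖v i‖ ^ 2 + inner ℝ (u x)
          (fderiv ℝ (fun y => fderiv ℝ u y (EuclideanSpace.single i 1)) x
            (EuclideanSpace.single i 1)))
        + (c + (α + 2) / 2) * (-(α + 2 + 2) * (x i ^ 2 / ‖x‖ ^ 2) * ‖u x‖ ^ 2 + ‖u x‖ ^ 2
          + 2 * (x i * inner ℝ (u x) (v i)))))
      = W * (-(α + 2) * P + ‖x‖ ^ 2 * (Q + inner ℝ (u x) (lap u x))
        + (c + (α + 2) / 2) * (-(α + 2 + 2) * ‖u x‖ ^ 2 + n * ‖u x‖ ^ 2 + 2 * P)) := by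
    rw [hL]
    simp_rw [← Finset.mul_sum, Finset.sum_add_distrib, ← Finset.mul_sum, Finset.sum_add_distrib,
      ← Finset.sum_mul, ← Finset.mul_sum, ← Finset.sum_div, hr]
    rw [div_self (by positivity)]
    simp only [Finset.sum_const, Finset.card_univ, Fintype.card_fin, nsmul_eq_mul, ← hP, ← hQ,
      mul_one]
  rw [hsum]
  have hnn : (n : ℝ) = 2 * c + α + 4 := by rw [hc]; ring
  have key : ‖x‖ ^ 4 * ‖lap u x‖ ^ 2 - C ^ 2 * ‖u x‖ ^ 2
      + 2 * C * (-(α + 2) * P + ‖x‖ ^ 2 * (Q + inner ℝ (u x) (lap u x))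
        + (c + (α + 2) / 2) * (-(α + 2 + 2) * ‖u x‖ ^ 2 + n * ‖u x‖ ^ 2 + 2 * P))
      = (‖x‖ ^ 4 * ‖lap u x‖ ^ 2 + 2 * C * ‖x‖ ^ 2 * inner ℝ (u x) (lap u x)
        + C ^ 2 * ‖u x‖ ^ 2) + 2 * C * (‖x‖ ^ 2 * Q + 2 * c * P + c ^ 2 * ‖u x‖ ^ 2) := by
    rw [hnn]
    linear_combination (-2 * C * ‖u x‖ ^ 2) * hC
  have h3 := mul_nonneg hWp.le (add_nonneg s1 (mul_nonneg (mul_nonneg zero_le_two hC0) s2))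
  rw [← key] at h3
  linarith

theorem weighted_rellich_L2 (n : ℕ) (hn : 2 ≤ n) (α : ℝ) (hα1 : -2 < α)
    (hα2 : α + 4 < n)
    (u : EuclideanSpace ℝ (Fin n) → ℂ) (hu : ContDiff ℝ (⊤ : ℕ∞) u) (hcs : HasCompactSupport u)
    (hsupp : (0 : EuclideanSpace ℝ (Fin n)) ∉ tsupport u) :
    ∫ x, ‖lap u x‖ ^ 2 / ‖x‖ ^ α ≥
      (((n : ℝ) + α) ^ 2 * ((n : ℝ) - α - 4) ^ 2 / 16) * ∫ x, ‖u x‖ ^ 2 / ‖x‖ ^ (α + 4) := by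
  set c : ℝ := (n - α - 4) / 2 with hc
  set C : ℝ := c * (c + (α + 2)) with hC
  have hC0 : 0 ≤ C := by
    have : 0 < c := by rw [hc]; linarith
    exact mul_nonneg this.le (by linarith)
  have hconst : ((n : ℝ) + α) ^ 2 * ((n : ℝ) - α - 4) ^ 2 / 16 = C ^ 2 := by
    rw [hC, hc]; ring
  have d1 : ∀ x : EuclideanSpace ℝ (Fin n),
      ‖lap u x‖ ^ 2 / ‖x‖ ^ α = ‖x‖ ^ (-α) * ‖lap u x‖ ^ 2 := fun x => by
    rw [Real.rpow_neg (norm_nonneg x), div_eq_inv_mul]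
  have d2 : ∀ x : EuclideanSpace ℝ (Fin n),
      ‖u x‖ ^ 2 / ‖x‖ ^ (α + 4) = ‖x‖ ^ (-(α + 4)) * ‖u x‖ ^ 2 := fun x => by
    rw [Real.rpow_neg (norm_nonneg x), div_eq_inv_mul]
  simp_rw [d1, d2, hconst]
  have hvc : ∀ i, ContDiff ℝ (⊤ : ℕ∞) (fun y => fderiv ℝ u y (EuclideanSpace.single i 1)) :=
    fun i => (hu.fderiv_right (m := (⊤ : ℕ∞)) (by norm_cast)).clm_apply contDiff_const
  have hlapc : ContDiff ℝ 1 (lap u) := ContDiff.sum fun i _ =>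
    ((hvc i).fderiv_right (m := 1) (by norm_cast)).clm_apply contDiff_const
  -- `u` vanishes near every point off its support, hence so do all quantities built from its jet
  have hz : ∀ x ∉ tsupport u, u x = 0 ∧ (∀ i, fderiv ℝ u x (EuclideanSpace.single i 1) = 0)
      ∧ lap u x = 0 := by
    intro x hx
    have h1 : ∀ i, ∀ y ∉ tsupport u, fderiv ℝ u y (EuclideanSpace.single i 1) = 0 := by
      intro i y hy
      rw [(notMem_tsupport_iff_eventuallyEq.1 hy).fderiv_eq]
      simp
    refine ⟨image_eq_zero_of_notMem_tsupport hx, fun i => h1 i x hx, ?_⟩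
    refine Finset.sum_eq_zero fun i _ => ?_
    have h2 : (fun y => fderiv ℝ u y (EuclideanSpace.single i 1)) =ᶠ[nhds x] fun _ => 0 := by
      filter_upwards [(isClosed_tsupport u).isOpen_compl.mem_nhds hx] with y hy
      exact h1 i y hy
    rw [h2.fderiv_eq]
    simp
  have hsub : ∀ g : EuclideanSpace ℝ (Fin n) → ℝ, (∀ x ∉ tsupport u, g x = 0) →
      tsupport g ⊆ tsupport u := fun g hg =>
    closure_minimal (fun x hx => by_contra fun h => hx (hg x h)) (isClosed_tsupport u)
  have hcd : ∀ (s : ℝ) (g : EuclideanSpace ℝ (Fin n) → ℝ), ContDiff ℝ 1 g →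
      (∀ x ∉ tsupport u, g x = 0) → ContDiff ℝ 1 (fun x => ‖x‖ ^ s * g x) :=
    fun s g hg h => contDiff_weight_mul s hg fun h0 => hsupp (hsub g h h0)
  have hcc : ∀ g : EuclideanSpace ℝ (Fin n) → ℝ, (∀ x ∉ tsupport u, g x = 0) →
      HasCompactSupport g := fun g hg => HasCompactSupport.intro hcs hg
  have hint : ∀ (s : ℝ) (g : EuclideanSpace ℝ (Fin n) → ℝ), ContDiff ℝ 1 g →
      (∀ x ∉ tsupport u, g x = 0) → Integrable (fun x => ‖x‖ ^ s * g x) := fun s g hg h =>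
    (hcd s g hg h).continuous.integrable_of_hasCompactSupport
      (hcc _ fun x hx => by simp [h x hx])
  have hu1 : ContDiff ℝ 1 u := hu.of_le (by norm_cast)
  have i1 := hint (-α) (fun x => ‖lap u x‖ ^ 2) (hlapc.norm_sq ℝ)
    fun x hx => by simp [(hz x hx).2.2]
  have i2 := hint (-(α + 4)) (fun x => ‖u x‖ ^ 2) (hu1.norm_sq ℝ)
    fun x hx => by simp [(hz x hx).1]
  have hF : ∀ i, Integrable (fun x => fderiv ℝ (rellichField (α + 2) (c + (α + 2) / 2) u i) x
        (EuclideanSpace.single i 1)) ∧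
      ∫ x, fderiv ℝ (rellichField (α + 2) (c + (α + 2) / 2) u i) x
        (EuclideanSpace.single i 1) = 0 := by
    intro i
    refine integral_fderiv_eq_zero ?_ ?_ _
    · refine ContDiff.add ?_ (contDiff_const.mul ?_)
      · exact hcd _ _ (hu1.inner ℝ ((hvc i).of_le (by norm_cast)))
          fun x hx => by simp [(hz x hx).1]
      · exact hcd _ _ (((EuclideanSpace.proj i :
          EuclideanSpace ℝ (Fin n) →L[ℝ] ℝ).contDiff).mul (hu1.norm_sq ℝ))
          fun x hx => by simp [(hz x hx).1]
    · exact hcc _ fun x hx => by simp [rellichField, (hz x hx).1]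
  have hdiv : ∫ x, -(2 * C) * ∑ i, fderiv ℝ (rellichField (α + 2) (c + (α + 2) / 2) u i) x
      (EuclideanSpace.single i 1) = 0 := by
    rw [integral_const_mul, integral_finsetSum _ fun i _ => (hF i).1]
    simp [fun i => (hF i).2]
  have : Nonempty (Fin n) := ⟨⟨0, by omega⟩⟩
  have hmono := integral_mono_ae
    ((integrable_finsetSum Finset.univ fun i _ => (hF i).1).const_mul (-(2 * C)))
    (i1.sub (i2.const_mul (C ^ 2)))
    (by
      have h0 : ∀ᵐ x : EuclideanSpace ℝ (Fin n), x ≠ 0 := by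
        simp [ae_iff]
      filter_upwards [h0] with x hx
      exact pointwise_rellich α c C hc hC hC0 hu hx)
  rw [hdiv] at hmono
  have hsubint : ∫ x, (‖x‖ ^ (-α) * ‖lap u x‖ ^ 2 - C ^ 2 * (‖x‖ ^ (-(α + 4)) * ‖u x‖ ^ 2))
      = (∫ x, ‖x‖ ^ (-α) * ‖lap u x‖ ^ 2) - C ^ 2 * ∫ x, ‖x‖ ^ (-(α + 4)) * ‖u x‖ ^ 2 := by
    rw [integral_sub i1 (i2.const_mul _), integral_const_mul]
  have hfinal := hmono.trans_eq hsubint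
  linarith
end
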